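/- Let c𝒜 be the cone of the affine arrangement 𝒜. Then for every k ≥ 0, dim_ℚ B(c𝒜)_k = dim_ℚ B(𝒜)_k + dim_ℚ B(𝒜)_{k−1}, where B(−)_k denotes the degree-k graded component (grading by total degree in the generators); equivalently Poin(B(c𝒜)) = (1 + t²)·Poin(B(𝒜)) when each generator is placed in degree 2. -/

import Mathlib

/-!
The dimensions of the graded pieces are computed by comparing them with numbers of chambers.

*Upper bound in each degree* (`arrDim_cone_le`). Since `e₀² = 0`, every element of `B(c𝒜)` has the
form `a + e₀ b` with `a`, `b` polynomials in the other generators, and the relations of `𝒜` hold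
in `B(c𝒜)` modulo `e₀` and after multiplication by `e₀`. Hence
`dim B(c𝒜)ₖ ≤ dim B(𝒜)ₖ + dim B(𝒜)ₖ₋₁`. The delicate family is the second one: if the `H i`,
`i ∈ S`, have no common point, then `r` is a linear combination of the forms of the `cH i`, and
this dependence supplies a relation of the third kind containing `e₀`.

*Upper bound for the total dimension* (`sum_arrDim_le_chambers`). By deletion and restriction,
`dim B(𝒜) ≤ #C(𝒜)`, the number of chambers. As hyperplanes may be parallel, the class of
arrangements is enlarged so as to allow constant functions, and the restriction to `H` is encoded
by pulling functions back along a projection onto `H`.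

*Lower bound for central arrangements* (`chambers_le_sum_arrDim`). The Heaviside functions generate
the algebra of functions on the set of chambers. For a central arrangement every generator of the
ideal is the leading form of a polynomial that vanishes when evaluated at the Heaviside functions
(the filtration of Varchenko and Gelfand), so `#C ≤ dim B`.

*Conclusion* (`arrDim_cone_eq`). The cone has at least `2 · #C(𝒜)` chambers, since each chamber of
`𝒜` at height `r = 1` also has an opposite copy at height `r = -1`. Therefore
`2 · dim B(𝒜) ≤ 2 · #C(𝒜) ≤ #C(c𝒜) ≤ dim B(c𝒜)`, and the bounds of the first step, whose sum over
`k` is `2 · dim B(𝒜)`, must all be equalities.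
-/

open MvPolynomial Set

variable {V : Type*} [NormedAddCommGroup V] [NormedSpace ℝ V] [FiniteDimensional ℝ V]

/-- The hyperplane `H i`. -/
def Hyp {n : ℕ} (ω : Fin n → V →ᵃ[ℝ] ℝ) (i : Fin n) : Set V := {v | ω i v = 0}

/-- The open positive half-space `H i⁺`. -/
def Hplus {n : ℕ} (ω : Fin n → V →ᵃ[ℝ] ℝ) (i : Fin n) : Set V := {v | 0 < ω i v}

/-- The open negative half-space `H i⁻`. -/
def Hminus {n : ℕ} (ω : Fin n → V →ᵃ[ℝ] ℝ) (i : Fin n) : Set V := {v | ω i v < 0}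

/-- The defining linear forms of the cone `c𝒜` on `V ⊕ ℝ`: the extra hyperplane `cH₀`
has form `cω₀(v, r) = -r`, and `cHᵢ` has form `cωᵢ(v, r) = ω̄ᵢ(v) - r·aᵢ`
(where `Hᵢ = ω̄ᵢ⁻¹(aᵢ)`, i.e. `aᵢ = -ωᵢ(0)`). -/
noncomputable def coneForm {n : ℕ} (ω : Fin n → V →ᵃ[ℝ] ℝ) :
    Option (Fin n) → (V × ℝ) →ₗ[ℝ] ℝ
  | none => -LinearMap.snd ℝ V ℝ
  | some i => (ω i).linear.comp (LinearMap.fst ℝ V ℝ) + (ω i 0) • LinearMap.snd ℝ V ℝ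

/-- The hyperplane `cH j` of the cone. -/
noncomputable def cHyp {n : ℕ} (ω : Fin n → V →ᵃ[ℝ] ℝ) (j : Option (Fin n)) :
    Set (V × ℝ) := {p | coneForm ω j p = 0}

/-- The open positive half-space `cH j⁺` of the cone. -/
noncomputable def cHplus {n : ℕ} (ω : Fin n → V →ᵃ[ℝ] ℝ) (j : Option (Fin n)) :
    Set (V × ℝ) := {p | 0 < coneForm ω j p}

/-- The open negative half-space `cH j⁻` of the cone. -/
noncomputable def cHminus {n : ℕ} (ω : Fin n → V →ᵃ[ℝ] ℝ) (j : Option (Fin n)) :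
    Set (V × ℝ) := {p | coneForm ω j p < 0}

/-- Family (1) of the Cordovil ideal: `e i ^ 2`. -/
def bFam1 (ι : Type*) : Set (MvPolynomial ι ℚ) := {p | ∃ i : ι, p = X i ^ 2}

/-- Family (2): `∏_{i∈S} e i` whenever `⋂_{i∈S} Z i = ∅`. -/
def bFam2 {ι W : Type*} (Z : ι → Set W) : Set (MvPolynomial ι ℚ) :=
  {p | ∃ S : Finset ι, (⋂ i ∈ S, Z i) = ∅ ∧ p = ∏ i ∈ S, X i}

/-- Family (3): `Σ_{k∈S⁻} (∏_{i∈S⁺} e i · ∏_{j∈S⁻, j≠k} e j) -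
Σ_{k∈S⁺} (∏_{i∈S⁺, i≠k} e i · ∏_{j∈S⁻} e j)` for disjoint `S⁺, S⁻` with
`⋂_{i∈S⁺} Z⁺ i ∩ ⋂_{j∈S⁻} Z⁻ j = ∅` and `⋂_{i∈S⁺∪S⁻} Z i ≠ ∅`. -/
def bFam3 {ι W : Type*} [DecidableEq ι] (Z Zp Zm : ι → Set W) :
    Set (MvPolynomial ι ℚ) :=
  {p | ∃ Sp Sm : Finset ι, Disjoint Sp Sm ∧
    (⋂ i ∈ Sp, Zp i) ∩ (⋂ j ∈ Sm, Zm j) = ∅ ∧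
    (⋂ i ∈ (Sp ∪ Sm : Finset ι), Z i) ≠ ∅ ∧
    p = (∑ k ∈ Sm, ((∏ i ∈ Sp, X i) * ∏ j ∈ Sm.erase k, X j)) -
      ∑ k ∈ Sp, ((∏ i ∈ Sp.erase k, X i) * ∏ j ∈ Sm, X j)}

/-- The ideal `𝓘₀` defining the algebra `B(𝒜)`; the arrangement is recorded through its
hyperplanes `Z i` and open half-spaces `Zp i`, `Zm i`. -/
noncomputable def bIdeal {ι W : Type*} [DecidableEq ι] (Z Zp Zm : ι → Set W) :
    Ideal (MvPolynomial ι ℚ) :=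
  Ideal.span (bFam1 ι ∪ bFam2 Z ∪ bFam3 Z Zp Zm)

/-- The algebra `B(𝒜) = ℚ[e_H : H ∈ 𝒜] / 𝓘₀`. -/
abbrev BAlg {ι W : Type*} [DecidableEq ι] (Z Zp Zm : ι → Set W) :=
  MvPolynomial ι ℚ ⧸ bIdeal Z Zp Zm

/-- The degree-`k` graded component of `B(𝒜)` (grading by total degree in the
generators): the image of the homogeneous polynomials of degree `k`. -/
noncomputable def bGrade {ι W : Type*} [DecidableEq ι] (Z Zp Zm : ι → Set W) (k : ℕ) :
    Submodule ℚ (BAlg Z Zp Zm) :=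
  Submodule.map (Ideal.Quotient.mkₐ ℚ (bIdeal Z Zp Zm)).toLinearMap
    (MvPolynomial.homogeneousSubmodule ι ℚ k)

/-! ### Linear algebra -/

/-- A finite-dimensional `G` contains a subspace `L`, no larger than the image of `G` under `m`,
that represents every element of `G` modulo `ker m`. -/
theorem exists_small_lift {U Q : Type*} [AddCommGroup U] [Module ℚ U] [AddCommGroup Q]
    [Module ℚ Q] (m : U →ₗ[ℚ] Q) (G : Submodule ℚ U) [FiniteDimensional ℚ G] :
    ∃ L : Submodule ℚ U, L ≤ G ∧ FiniteDimensional ℚ L ∧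
      Module.finrank ℚ L ≤ Module.finrank ℚ (G.map m) ∧
      ∀ x ∈ G, ∃ y ∈ L, m (x - y) = 0 := by
  obtain ⟨s, hs⟩ := (m.submoduleMap G).exists_rightInverse_of_surjective
    (LinearMap.range_eq_top.2 (m.submoduleMap_surjective G))
  refine ⟨LinearMap.range (G.subtype ∘ₗ s), ?_, inferInstance, LinearMap.finrank_range_le _, ?_⟩
  · rintro _ ⟨y, rfl⟩
    exact (s y).2
  · intro x hx
    refine ⟨s (m.submoduleMap G ⟨x, hx⟩), ⟨_, rfl⟩, ?_⟩
    have h2 := congrArg Subtype.val (LinearMap.congr_fun hs (m.submoduleMap G ⟨x, hx⟩))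
    have h3 : m (s (m.submoduleMap G ⟨x, hx⟩)) = m x := h2
    rw [map_sub, h3, sub_self]

/-- Subadditivity of dimensions along a right exact sequence, at the level of lifts: the image of
`G` under `m` is spanned by the images of `G₁` (through `α`) and `G₂` (through `β`), and the
kernels of `m₁`, `m₂` contribute nothing new. -/
theorem finrank_map_le_add {U U₁ U₂ Q Q₁ Q₂ : Type*}
    [AddCommGroup U] [Module ℚ U] [AddCommGroup U₁] [Module ℚ U₁] [AddCommGroup U₂] [Module ℚ U₂]
    [AddCommGroup Q] [Module ℚ Q] [AddCommGroup Q₁] [Module ℚ Q₁] [AddCommGroup Q₂] [Module ℚ Q₂]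
    (m : U →ₗ[ℚ] Q) (m₁ : U₁ →ₗ[ℚ] Q₁) (m₂ : U₂ →ₗ[ℚ] Q₂)
    (G : Submodule ℚ U) (G₁ : Submodule ℚ U₁) (G₂ : Submodule ℚ U₂)
    [FiniteDimensional ℚ G₁] [FiniteDimensional ℚ G₂]
    (α : U₁ →ₗ[ℚ] U) (β : U₂ →ₗ[ℚ] U)
    (ha : ∀ x ∈ G₁, m₁ x = 0 → m (α x) = 0)
    (hb : ∀ x ∈ G₂, m₂ x = 0 → β x ∈ LinearMap.ker m ⊔ G₁.map α)
    (hc : G ≤ LinearMap.ker m ⊔ G₁.map α ⊔ G₂.map β) :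
    Module.finrank ℚ (G.map m) ≤
      Module.finrank ℚ (G₁.map m₁) + Module.finrank ℚ (G₂.map m₂) := by
  obtain ⟨L₁, hL₁, _, hd₁, hl₁⟩ := exists_small_lift m₁ G₁
  obtain ⟨L₂, hL₂, _, hd₂, hl₂⟩ := exists_small_lift m₂ G₂
  have h1 : (G₁.map α).map m ≤ L₁.map (m ∘ₗ α) := by
    rintro _ ⟨_, ⟨x, hx, rfl⟩, rfl⟩
    obtain ⟨y, hy, hxy⟩ := hl₁ x hx
    have := ha _ (sub_mem hx (hL₁ hy)) hxy
    refine ⟨y, hy, ?_⟩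
    rw [map_sub, map_sub, sub_eq_zero] at this
    exact this.symm
  have hker : (LinearMap.ker m).map m = ⊥ := by
    rw [eq_bot_iff]
    rintro _ ⟨x, hx, rfl⟩
    exact hx
  have h2 : (G₂.map β).map m ≤ L₁.map (m ∘ₗ α) ⊔ L₂.map (m ∘ₗ β) := by
    rintro _ ⟨_, ⟨x, hx, rfl⟩, rfl⟩
    obtain ⟨y, hy, hxy⟩ := hl₂ x hx
    have := Submodule.mem_map_of_mem (f := m) (hb _ (sub_mem hx (hL₂ hy)) hxy)
    rw [Submodule.map_sup, hker, bot_sup_eq] at this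
    have h3 : m (β x) = m (β (x - y)) + (m ∘ₗ β) y := by simp
    rw [h3]
    exact Submodule.add_mem_sup (h1 this) (Submodule.mem_map_of_mem hy)
  have h3 : G.map m ≤ L₁.map (m ∘ₗ α) ⊔ L₂.map (m ∘ₗ β) := by
    refine (Submodule.map_mono hc).trans ?_
    rw [Submodule.map_sup, Submodule.map_sup, hker, bot_sup_eq]
    exact sup_le (h1.trans le_sup_left) h2
  calc Module.finrank ℚ (G.map m)
      ≤ Module.finrank ℚ ↥(L₁.map (m ∘ₗ α) ⊔ L₂.map (m ∘ₗ β)) := Submodule.finrank_mono h3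
    _ ≤ Module.finrank ℚ (L₁.map (m ∘ₗ α)) + Module.finrank ℚ (L₂.map (m ∘ₗ β)) :=
        Submodule.finrank_add_le_finrank_add_finrank _ _
    _ ≤ Module.finrank ℚ L₁ + Module.finrank ℚ L₂ :=
        add_le_add (Submodule.finrank_map_le _ _) (Submodule.finrank_map_le _ _)
    _ ≤ _ := add_le_add hd₁ hd₂

/-! ### Homogeneous elements of an ideal -/

theorem homogeneousComponent_succ_X_mul {ι : Type*} (i : ι) (k : ℕ) (p : MvPolynomial ι ℚ) :
    homogeneousComponent (k + 1) (X i * p) = X i * homogeneousComponent k p := by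
  classical
  ext d
  rw [coeff_homogeneousComponent, coeff_X_mul', coeff_X_mul', coeff_homogeneousComponent]
  by_cases hi : i ∈ d.support
  · have hd : d = (d - Finsupp.single i 1) + Finsupp.single i 1 := by
      rw [tsub_add_cancel_of_le]
      simpa [Finsupp.single_le_iff, Nat.one_le_iff_ne_zero] using hi
    have hdeg : d.degree = (d - Finsupp.single i 1).degree + 1 := by
      conv_lhs => rw [hd]
      simp [map_add]
    simp [hi, hdeg]
  · simp [hi]

theorem homogeneousComponent_zero_X_mul {ι : Type*} (i : ι) (p : MvPolynomial ι ℚ) :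
    homogeneousComponent 0 (X i * p) = 0 := by
  classical
  rw [homogeneousComponent_zero, coeff_X_mul']
  simp

/-- Induction principle for homogeneous elements of an ideal generated by homogeneous
polynomials: a family `M k` compatible with multiplication by variables and containing each
generator in its degree contains every homogeneous element of the ideal in its degree. -/
theorem graded_mem {ι : Type*} {G : Set (MvPolynomial ι ℚ)}
    (M : ℕ → Submodule ℚ (MvPolynomial ι ℚ))
    (hX : ∀ k p i, p ∈ M k → X i * p ∈ M (k + 1))
    (hG : ∀ g ∈ G, ∃ d, g.IsHomogeneous d ∧ g ∈ M d)
    {p : MvPolynomial ι ℚ} (hp : p ∈ Ideal.span G) {k : ℕ} (hk : p.IsHomogeneous k) :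
    p ∈ M k := by
  have hmul : ∀ a x : MvPolynomial ι ℚ, (∀ k, homogeneousComponent k x ∈ M k) →
      ∀ k, homogeneousComponent k (a * x) ∈ M k := by
    intro a
    induction a using MvPolynomial.induction_on with
    | C c =>
      intro x hx k
      rw [homogeneousComponent_C_mul, ← smul_eq_C_mul]
      exact (M k).smul_mem c (hx k)
    | add a b iha ihb =>
      intro x hx k
      rw [add_mul, map_add]
      exact (M k).add_mem (iha x hx k) (ihb x hx k)
    | mul_X a i iha =>
      intro x hx k
      rw [mul_assoc]
      refine iha _ (fun k => ?_) k
      cases k with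
      | zero => rw [homogeneousComponent_zero_X_mul]; exact zero_mem _
      | succ k => rw [homogeneousComponent_succ_X_mul]; exact hX _ _ _ (hx k)
  have key : ∀ k, homogeneousComponent k p ∈ M k := by
    clear hk
    induction hp using Submodule.span_induction with
    | mem g hg =>
      obtain ⟨d, hd, hgM⟩ := hG g hg
      intro k
      rw [homogeneousComponent_of_mem (n := d) hd]
      split_ifs with h
      · exact h ▸ hgM
      · exact zero_mem _
    | zero => intro k; rw [map_zero]; exact zero_mem _
    | add x y _ _ hx hy => intro k; rw [map_add]; exact (M k).add_mem (hx k) (hy k)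
    | smul a x _ hx => exact hmul a x hx
  have := key k
  rwa [homogeneousComponent_eq_self hk] at this

/-! ### Arrangements of affine functions -/

section

set_option linter.unusedSectionVars false

variable {ι κ E : Type*} [DecidableEq ι] [DecidableEq κ] [AddCommGroup E] [Module ℝ E]

/-- The zero sets of a family of affine functions. The functions are allowed to be constant, which
makes the class of arrangements closed under restriction to a hyperplane. -/
def zeroLoc (ω : ι → E →ᵃ[ℝ] ℝ) (i : ι) : Set E := {v | ω i v = 0}

/-- The open sets where the affine functions are positive. -/
def posLoc (ω : ι → E →ᵃ[ℝ] ℝ) (i : ι) : Set E := {v | 0 < ω i v}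

/-- The open sets where the affine functions are negative. -/
def negLoc (ω : ι → E →ᵃ[ℝ] ℝ) (i : ι) : Set E := {v | ω i v < 0}

/-- The ideal `𝓘₀` of a family of affine functions. -/
noncomputable def arrIdeal (ω : ι → E →ᵃ[ℝ] ℝ) : Ideal (MvPolynomial ι ℚ) :=
  bIdeal (zeroLoc ω) (posLoc ω) (negLoc ω)

/-- The quotient map onto `B`, as a linear map. -/
noncomputable def arrMk (ω : ι → E →ᵃ[ℝ] ℝ) :
    MvPolynomial ι ℚ →ₗ[ℚ] BAlg (zeroLoc ω) (posLoc ω) (negLoc ω) :=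
  (Ideal.Quotient.mkₐ ℚ (bIdeal (zeroLoc ω) (posLoc ω) (negLoc ω))).toLinearMap

/-- The dimension of the degree-`k` component of `B`. -/
noncomputable def arrDim (ω : ι → E →ᵃ[ℝ] ℝ) (k : ℕ) : ℕ :=
  Module.finrank ℚ ((homogeneousSubmodule ι ℚ k).map (arrMk ω))

/-- The sign vectors of the chambers, i.e. of the points off all the zero sets. -/
def chambers (ω : ι → E →ᵃ[ℝ] ℝ) : Set (ι → Bool) :=
  {σ | ∃ v, ∀ i, if σ i then 0 < ω i v else ω i v < 0}

/-- The squarefree monomial `e_S`. -/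
noncomputable def eProd (S : Finset ι) : MvPolynomial ι ℚ := ∏ i ∈ S, X i

/-- The sum `Σ_{k ∈ S} e_{S ∖ k}`. -/
noncomputable def eBdry (S : Finset ι) : MvPolynomial ι ℚ := ∑ k ∈ S, ∏ j ∈ S.erase k, X j

/-- The relation of family (3) attached to a pair `S⁺, S⁻`. -/
noncomputable def eRel (Sp Sm : Finset ι) : MvPolynomial ι ℚ :=
  eProd Sp * eBdry Sm - eBdry Sp * eProd Sm

theorem eRel_eq (Sp Sm : Finset ι) :
    eRel Sp Sm = (∑ k ∈ Sm, ((∏ i ∈ Sp, X i) * ∏ j ∈ Sm.erase k, X j)) -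
      ∑ k ∈ Sp, ((∏ i ∈ Sp.erase k, X i) * ∏ j ∈ Sm, X j) := by
  rw [eRel, eProd, eProd, eBdry, eBdry, Finset.mul_sum, Finset.sum_mul]

theorem eProd_insert {a : ι} {S : Finset ι} (ha : a ∉ S) :
    eProd (insert a S) = X a * eProd S := Finset.prod_insert ha

theorem eBdry_insert {a : ι} {S : Finset ι} (ha : a ∉ S) :
    eBdry (insert a S) = eProd S + X a * eBdry S := by
  rw [eBdry, Finset.sum_insert ha, Finset.erase_insert ha, eBdry, Finset.mul_sum, eProd]
  congr 1
  refine Finset.sum_congr rfl fun k hk => ?_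
  have hka : k ≠ a := fun h => ha (h ▸ hk)
  rw [Finset.erase_insert_of_ne hka.symm, Finset.prod_insert]
  exact fun h => ha (Finset.mem_of_mem_erase h)

theorem eRel_insert_left {a : ι} {Sp Sm : Finset ι} (ha : a ∉ Sp) :
    eRel (insert a Sp) Sm = X a * eRel Sp Sm - eProd Sp * eProd Sm := by
  rw [eRel, eRel, eProd_insert ha, eBdry_insert ha]; ring

theorem eRel_insert_right {a : ι} {Sp Sm : Finset ι} (ha : a ∉ Sm) :
    eRel Sp (insert a Sm) = X a * eRel Sp Sm + eProd Sp * eProd Sm := by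
  rw [eRel, eRel, eProd_insert ha, eBdry_insert ha]; ring

theorem eProd_empty : eProd (∅ : Finset ι) = 1 := Finset.prod_empty

theorem eBdry_empty : eBdry (∅ : Finset ι) = 0 := Finset.sum_empty

theorem rename_eProd (s : κ ↪ ι) (S : Finset κ) :
    rename s (eProd S) = eProd (S.map s) := by
  simp [eProd, map_prod]

theorem rename_eBdry (s : κ ↪ ι) (S : Finset κ) :
    rename s (eBdry S) = eBdry (S.map s) := by
  simp only [eBdry, map_sum, map_prod, rename_X, Finset.sum_map]
  refine Finset.sum_congr rfl fun k _ => ?_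
  rw [← Finset.map_erase, Finset.prod_map]

theorem rename_eRel (s : κ ↪ ι) (Sp Sm : Finset κ) :
    rename s (eRel Sp Sm) = eRel (Sp.map s) (Sm.map s) := by
  simp only [eRel, map_sub, map_mul, rename_eProd, rename_eBdry]

theorem eProd_isHomogeneous (S : Finset ι) : (eProd S).IsHomogeneous S.card := by
  have := IsHomogeneous.prod S (fun i => (X i : MvPolynomial ι ℚ)) (fun _ => 1)
    (fun i _ => isHomogeneous_X ℚ i)
  simpa [eProd] using this

theorem eBdry_isHomogeneous (S : Finset ι) : (eBdry S).IsHomogeneous (S.card - 1) := by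
  refine IsHomogeneous.sum _ _ _ fun k hk => ?_
  rw [← Finset.card_erase_of_mem hk]
  exact eProd_isHomogeneous _

theorem eRel_isHomogeneous (Sp Sm : Finset ι) :
    (eRel Sp Sm).IsHomogeneous (Sp.card + Sm.card - 1) := by
  refine IsHomogeneous.sub ?_ ?_
  · rcases Sm.eq_empty_or_nonempty with rfl | h
    · rw [eBdry_empty, mul_zero]; exact isHomogeneous_zero _ _ _
    · have := (eProd_isHomogeneous Sp).mul (eBdry_isHomogeneous Sm)
      rwa [← Nat.add_sub_assoc h.card_pos] at this
  · rcases Sp.eq_empty_or_nonempty with rfl | h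
    · rw [eBdry_empty, zero_mul]; exact isHomogeneous_zero _ _ _
    · have := (eBdry_isHomogeneous Sp).mul (eProd_isHomogeneous Sm)
      rwa [← Nat.sub_add_comm h.card_pos] at this

theorem sq_mem_arrIdeal (ω : ι → E →ᵃ[ℝ] ℝ) (i : ι) : X i ^ 2 ∈ arrIdeal ω :=
  Ideal.subset_span (Or.inl (Or.inl ⟨i, rfl⟩))

theorem eProd_mem_arrIdeal (ω : ι → E →ᵃ[ℝ] ℝ) (S : Finset ι)
    (hS : ∀ v, ∃ i ∈ S, ω i v ≠ 0) : eProd S ∈ arrIdeal ω := by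
  refine Ideal.subset_span (Or.inl (Or.inr ⟨S, ?_, rfl⟩))
  rw [Set.eq_empty_iff_forall_notMem]
  intro v hv
  obtain ⟨i, hi, hne⟩ := hS v
  exact hne (Set.mem_iInter₂.1 hv i hi)

theorem eRel_mem_arrIdeal (ω : ι → E →ᵃ[ℝ] ℝ) (Sp Sm : Finset ι) (hd : Disjoint Sp Sm)
    (hinf : ∀ v, (∀ i ∈ Sp, 0 < ω i v) → (∀ i ∈ Sm, ω i v < 0) → False)
    (hz : ∃ v, (∀ i ∈ Sp, ω i v = 0) ∧ ∀ i ∈ Sm, ω i v = 0) :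
    eRel Sp Sm ∈ arrIdeal ω := by
  refine Ideal.subset_span (Or.inr ⟨Sp, Sm, hd, ?_, ?_, eRel_eq _ _⟩)
  · rw [Set.eq_empty_iff_forall_notMem]
    rintro v ⟨h1, h2⟩
    exact hinf v (fun i hi => Set.mem_iInter₂.1 h1 i hi) (fun i hi => Set.mem_iInter₂.1 h2 i hi)
  · obtain ⟨v, h1, h2⟩ := hz
    rw [← Set.nonempty_iff_ne_empty]
    refine ⟨v, Set.mem_iInter₂.2 fun i hi => ?_⟩
    rcases Finset.mem_union.1 hi with h | h
    · exact h1 i h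
    · exact h2 i h

/-- `graded_mem` specialised to the three families of generators of `𝓘₀`. -/
theorem arrIdeal_graded_mem (ω : ι → E →ᵃ[ℝ] ℝ)
    (M : ℕ → Submodule ℚ (MvPolynomial ι ℚ))
    (hX : ∀ k p i, p ∈ M k → X i * p ∈ M (k + 1))
    (h1 : ∀ i, X i ^ 2 ∈ M 2)
    (h2 : ∀ S : Finset ι, (∀ v, ∃ i ∈ S, ω i v ≠ 0) → eProd S ∈ M S.card)
    (h3 : ∀ Sp Sm : Finset ι, Disjoint Sp Sm →
      (∀ v, (∀ i ∈ Sp, 0 < ω i v) → (∀ i ∈ Sm, ω i v < 0) → False) →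
      (∃ v, (∀ i ∈ Sp, ω i v = 0) ∧ ∀ i ∈ Sm, ω i v = 0) →
      eRel Sp Sm ∈ M (Sp.card + Sm.card - 1))
    {p : MvPolynomial ι ℚ} (hp : p ∈ arrIdeal ω) {k : ℕ} (hk : p.IsHomogeneous k) :
    p ∈ M k := by
  refine graded_mem M hX ?_ hp hk
  rintro g ((⟨i, rfl⟩ | ⟨S, hS, rfl⟩) | ⟨Sp, Sm, hd, hinf, hz, rfl⟩)
  · exact ⟨2, isHomogeneous_X_pow i 2, h1 i⟩
  · refine ⟨S.card, eProd_isHomogeneous S, h2 S fun v => ?_⟩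
    by_contra! hcon
    have : v ∈ ⋂ i ∈ S, zeroLoc ω i := Set.mem_iInter₂.2 hcon
    rw [hS] at this
    exact this
  · rw [← eRel_eq]
    refine ⟨_, eRel_isHomogeneous Sp Sm, h3 Sp Sm hd (fun v hp hm => ?_) ?_⟩
    · have : v ∈ (⋂ i ∈ Sp, posLoc ω i) ∩ ⋂ j ∈ Sm, negLoc ω j :=
        ⟨Set.mem_iInter₂.2 hp, Set.mem_iInter₂.2 hm⟩
      rw [hinf] at this
      exact this
    · obtain ⟨v, hv⟩ := Set.nonempty_iff_ne_empty.2 hz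
      have hv' := Set.mem_iInter₂.1 hv
      exact ⟨v, fun i hi => hv' i (Finset.mem_union_left _ hi),
        fun i hi => hv' i (Finset.mem_union_right _ hi)⟩

theorem arrMk_eq_zero_iff (ω : ι → E →ᵃ[ℝ] ℝ) (p : MvPolynomial ι ℚ) :
    arrMk ω p = 0 ↔ p ∈ arrIdeal ω := Ideal.Quotient.eq_zero_iff_mem

instance homogeneousSubmodule_finiteDimensional (ι : Type*) [Finite ι] (k : ℕ) :
    FiniteDimensional ℚ (homogeneousSubmodule ι ℚ k) :=
  Module.Finite.of_fg (homogeneousSubmodule_fg ι ℚ k)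
/-! ### Adjoining one variable -/

/-- The homogeneous polynomials of degree `k - 1`, read as `0` when `k = 0`. -/
noncomputable def prevHom (κ : Type*) : ℕ → Submodule ℚ (MvPolynomial κ ℚ)
  | 0 => ⊥
  | k + 1 => homogeneousSubmodule κ ℚ k

instance prevHom_finiteDimensional (κ : Type*) [Finite κ] (k : ℕ) :
    FiniteDimensional ℚ (prevHom κ k) := by
  cases k with
  | zero => exact inferInstanceAs (FiniteDimensional ℚ (⊥ : Submodule ℚ (MvPolynomial κ ℚ)))
  | succ k => exact homogeneousSubmodule_finiteDimensional κ k

/-- The dimension of the degree-`(k - 1)` component of `B`, read as `0` when `k = 0`. -/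
noncomputable def prevDim (ω : ι → E →ᵃ[ℝ] ℝ) (k : ℕ) : ℕ :=
  Module.finrank ℚ ((prevHom ι k).map (arrMk ω))

theorem prevDim_zero (ω : ι → E →ᵃ[ℝ] ℝ) : prevDim ω 0 = 0 := by
  rw [prevDim, prevHom, Submodule.map_bot, finrank_bot]

theorem prevDim_succ (ω : ι → E →ᵃ[ℝ] ℝ) (k : ℕ) : prevDim ω (k + 1) = arrDim ω k := rfl

/-- Renaming of variables along an embedding, as a linear map. -/
noncomputable def embR (s : κ ↪ ι) : MvPolynomial κ ℚ →ₗ[ℚ] MvPolynomial ι ℚ :=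
  (rename s).toLinearMap

/-- Renaming of variables followed by multiplication by the variable `X h`. -/
noncomputable def embT (s : κ ↪ ι) (h : ι) : MvPolynomial κ ℚ →ₗ[ℚ] MvPolynomial ι ℚ :=
  LinearMap.mulLeft ℚ (X h) ∘ₗ embR s

theorem embR_apply (s : κ ↪ ι) (p : MvPolynomial κ ℚ) : embR s p = rename s p := rfl

theorem embT_apply (s : κ ↪ ι) (h : ι) (p : MvPolynomial κ ℚ) :
    embT s h p = X h * rename s p := rfl

theorem embR_X_mul (s : κ ↪ ι) (j : κ) (p : MvPolynomial κ ℚ) :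
    embR s (X j * p) = X (s j) * embR s p := by
  simp [embR_apply]

theorem embT_X_mul (s : κ ↪ ι) (h : ι) (j : κ) (p : MvPolynomial κ ℚ) :
    embT s h (X j * p) = X (s j) * embT s h p := by
  simp only [embT_apply, map_mul, rename_X]; ring

theorem X_mul_mem_hom {k : ℕ} {p : MvPolynomial κ ℚ} (j : κ)
    (hp : p ∈ homogeneousSubmodule κ ℚ k) : X j * p ∈ homogeneousSubmodule κ ℚ (k + 1) := by
  rw [mem_homogeneousSubmodule] at *
  rw [add_comm]
  exact (isHomogeneous_X ℚ j).mul hp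

theorem X_mul_mem_prevHom {k : ℕ} {p : MvPolynomial κ ℚ} (j : κ)
    (hp : p ∈ prevHom κ k) : X j * p ∈ prevHom κ (k + 1) := by
  cases k with
  | zero =>
    have : p = 0 := hp
    rw [this, mul_zero]
    exact zero_mem _
  | succ k => exact X_mul_mem_hom j hp

theorem mem_ker_arrMk (ω : ι → E →ᵃ[ℝ] ℝ) (p : MvPolynomial ι ℚ) :
    p ∈ LinearMap.ker (arrMk ω) ↔ p ∈ arrIdeal ω := arrMk_eq_zero_iff ω p

theorem mul_mem_ker {ω : ι → E →ᵃ[ℝ] ℝ} {p : MvPolynomial ι ℚ} (q : MvPolynomial ι ℚ)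
    (hp : p ∈ LinearMap.ker (arrMk ω)) : q * p ∈ LinearMap.ker (arrMk ω) := by
  rw [mem_ker_arrMk] at *
  exact Ideal.mul_mem_left _ _ hp

/-- Since `X h ^ 2` is a relation, every homogeneous element is of the form `a + X h * b` modulo
`𝓘₀`, with `a` and `b` free of the variable `X h`. -/
theorem hom_le_sup (s : κ ↪ ι) (h : ι) (hh : ∀ i, i = h ∨ ∃ j, i = s j)
    (ω : ι → E →ᵃ[ℝ] ℝ) (k : ℕ) :
    homogeneousSubmodule ι ℚ k ≤ LinearMap.ker (arrMk ω) ⊔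
      (homogeneousSubmodule κ ℚ k).map (embR s) ⊔ (prevHom κ k).map (embT s h) := by
  intro p hp
  refine graded_mem (G := {1}) (fun k => LinearMap.ker (arrMk ω) ⊔
      (homogeneousSubmodule κ ℚ k).map (embR s) ⊔ (prevHom κ k).map (embT s h)) ?_ ?_
      (by simp) hp
  · intro k p i hp
    obtain ⟨y, hy, z, ⟨c, hc, rfl⟩, rfl⟩ := Submodule.mem_sup.1 hp
    obtain ⟨a, ha, w, ⟨b, hb, rfl⟩, rfl⟩ := Submodule.mem_sup.1 hy
    rcases hh i with rfl | ⟨j, rfl⟩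
    · have e : X i * (a + embR s b + embT s i c) =
          (X i * a + embR s c * X i ^ 2) + embR s 0 + embT s i b := by
        simp only [embT_apply, embR_apply, map_zero]; ring
      rw [e]
      refine Submodule.add_mem_sup (Submodule.add_mem_sup (add_mem (mul_mem_ker _ ha)
        (mul_mem_ker _ ?_)) (Submodule.mem_map_of_mem (zero_mem _)))
        (Submodule.mem_map_of_mem hb)
      exact (mem_ker_arrMk _ _).2 (sq_mem_arrIdeal ω i)
    · rw [mul_add, mul_add, ← embR_X_mul, ← embT_X_mul]
      exact Submodule.add_mem_sup (Submodule.add_mem_sup (mul_mem_ker _ ha)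
        (Submodule.mem_map_of_mem (X_mul_mem_hom j hb)))
        (Submodule.mem_map_of_mem (X_mul_mem_prevHom j hc))
  · rintro _ rfl
    refine ⟨0, isHomogeneous_one _ _, Submodule.mem_sup_left (Submodule.mem_sup_right ?_)⟩
    exact ⟨1, isHomogeneous_one _ _, map_one (rename s)⟩

/-! ### Deletion and restriction -/

theorem affine_add (g : E →ᵃ[ℝ] ℝ) (v w : E) : g (v + w) = g v + g.linear w := by
  have := g.map_vadd v w
  rw [vadd_eq_add, vadd_eq_add] at this
  rw [add_comm v w, this, add_comm]

theorem rename_mem_of_deletion (s : κ ↪ ι) (ω : ι → E →ᵃ[ℝ] ℝ) {k : ℕ}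
    {p : MvPolynomial κ ℚ} (hp : p ∈ arrIdeal (fun j => ω (s j))) (hk : p.IsHomogeneous k) :
    embR s p ∈ LinearMap.ker (arrMk ω) := by
  refine arrIdeal_graded_mem (fun j => ω (s j))
    (fun _ => (LinearMap.ker (arrMk ω)).comap (embR s)) ?_ ?_ ?_ ?_ hp hk
  · intro k p j hp
    rw [Submodule.mem_comap, embR_X_mul]
    exact mul_mem_ker _ hp
  · intro j
    rw [Submodule.mem_comap, mem_ker_arrMk, embR_apply, map_pow, rename_X]
    exact sq_mem_arrIdeal _ _
  · intro S hS
    rw [Submodule.mem_comap, mem_ker_arrMk, embR_apply, rename_eProd]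
    refine eProd_mem_arrIdeal _ _ fun v => ?_
    obtain ⟨j, hj, hne⟩ := hS v
    exact ⟨s j, Finset.mem_map_of_mem _ hj, hne⟩
  · rintro Sp Sm hd hinf ⟨v, h1, h2⟩
    rw [Submodule.mem_comap, mem_ker_arrMk, embR_apply, rename_eRel]
    refine eRel_mem_arrIdeal _ _ _ ((Finset.disjoint_map s).2 hd)
      (fun v hp hm => hinf v (fun j hj => hp _ (Finset.mem_map_of_mem _ hj))
        (fun j hj => hm _ (Finset.mem_map_of_mem _ hj))) ⟨v, ?_, ?_⟩
    · simpa using h1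
    · simpa using h2

/-- The restriction of an arrangement to the hyperplane `H = {ω h = 0}`, pulled back to the whole
space along the projection `v ↦ v - ω h v • u` onto `H` (where `u` has `(ω h).linear u = 1`). -/
noncomputable def restr (s : κ ↪ ι) (h : ι) (ω : ι → E →ᵃ[ℝ] ℝ) (u : E) (j : κ) : E →ᵃ[ℝ] ℝ :=
  ω (s j) - (ω (s j)).linear u • ω h

theorem restr_apply (s : κ ↪ ι) (h : ι) (ω : ι → E →ᵃ[ℝ] ℝ) (u : E) (j : κ) (v : E) :
    restr s h ω u j v = ω (s j) v - (ω (s j)).linear u * ω h v := rfl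

theorem restr_eq_proj (s : κ ↪ ι) (h : ι) (ω : ι → E →ᵃ[ℝ] ℝ) (u : E) (j : κ) (v : E) :
    restr s h ω u j v = ω (s j) (v + -(ω h v) • u) := by
  rw [restr_apply, affine_add, map_smul, smul_eq_mul]; ring

theorem proj_mem (h : ι) (ω : ι → E →ᵃ[ℝ] ℝ) {u : E} (hu : (ω h).linear u = 1) (v : E) :
    ω h (v + -(ω h v) • u) = 0 := by
  rw [affine_add, map_smul, hu, smul_eq_mul]; ring

theorem restr_of_mem (s : κ ↪ ι) (h : ι) (ω : ι → E →ᵃ[ℝ] ℝ) (u : E) (j : κ) {v : E}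
    (hv : ω h v = 0) : restr s h ω u j v = ω (s j) v := by
  rw [restr_apply, hv, mul_zero, sub_zero]

/-- An open polyhedron that misses `H` lies on one side of `H`. -/
theorem one_side (s : κ ↪ ι) (h : ι) (ω : ι → E →ᵃ[ℝ] ℝ) (Sp Sm : Finset κ)
    (hinf : ∀ v, ω h v = 0 → (∀ j ∈ Sp, 0 < ω (s j) v) → (∀ j ∈ Sm, ω (s j) v < 0) → False) :
    (∀ v, 0 < ω h v → (∀ j ∈ Sp, 0 < ω (s j) v) → (∀ j ∈ Sm, ω (s j) v < 0) → False) ∨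
    (∀ v, ω h v < 0 → (∀ j ∈ Sp, 0 < ω (s j) v) → (∀ j ∈ Sm, ω (s j) v < 0) → False) := by
  by_contra! hcon
  obtain ⟨⟨x, hx, hxp, hxm, -⟩, ⟨y, hy, hyp, hym, -⟩⟩ := hcon
  have hxy : 0 < ω h x - ω h y := by linarith
  -- the segment from `x` to `y` crosses `H` at the point with these barycentric coordinates
  set a := -ω h y / (ω h x - ω h y) with ha
  set b := ω h x / (ω h x - ω h y) with hb
  have hab : a + b = 1 := by rw [ha, hb]; field_simp; ring
  have ha0 : 0 < a := div_pos (by linarith) hxy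
  have hb0 : 0 < b := div_pos hx hxy
  have hcomb : ∀ g : E →ᵃ[ℝ] ℝ, g (a • x + b • y) = a * g x + b * g y := fun g =>
    Convex.combo_affine_apply hab
  refine hinf (a • x + b • y) ?_ ?_ ?_
  · rw [hcomb, ha, hb]; field_simp; ring
  · intro j hj
    rw [hcomb]
    exact add_pos (mul_pos ha0 (hxp j hj)) (mul_pos hb0 (hyp j hj))
  · intro j hj
    rw [hcomb]
    exact add_neg (mul_neg_of_pos_of_neg ha0 (hxm j hj)) (mul_neg_of_pos_of_neg hb0 (hym j hj))

/-- Multiplication by `X h` is well defined from `B` of the restriction to `B` modulo the image of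
`B` of the deletion. -/
theorem embT_mem_of_restr (s : κ ↪ ι) (h : ι) (hn : ∀ j, s j ≠ h) (ω : ι → E →ᵃ[ℝ] ℝ) {u : E}
    (hu : (ω h).linear u = 1) {k : ℕ} {p : MvPolynomial κ ℚ}
    (hp : p ∈ arrIdeal (restr s h ω u)) (hk : p.IsHomogeneous k) :
    embT s h p ∈ LinearMap.ker (arrMk ω) ⊔ (homogeneousSubmodule κ ℚ (k + 1)).map (embR s) := by
  have hnot : ∀ S : Finset κ, h ∉ S.map s := by
    intro S hS
    obtain ⟨j, -, hj⟩ := Finset.mem_map.1 hS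
    exact hn j hj
  refine arrIdeal_graded_mem (restr s h ω u)
    (fun k => (LinearMap.ker (arrMk ω) ⊔
      (homogeneousSubmodule κ ℚ (k + 1)).map (embR s)).comap (embT s h)) ?_ ?_ ?_ ?_ hp hk
  · intro k p j hp
    rw [Submodule.mem_comap, embT_X_mul]
    obtain ⟨a, ha, _, ⟨b, hb, rfl⟩, e⟩ := Submodule.mem_sup.1 hp
    rw [← e, mul_add, ← embR_X_mul]
    exact Submodule.add_mem_sup (mul_mem_ker _ ha)
      (Submodule.mem_map_of_mem (X_mul_mem_hom j hb))
  · intro j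
    refine Submodule.mem_sup_left ?_
    rw [embT_apply, map_pow, rename_X]
    exact mul_mem_ker _ ((mem_ker_arrMk _ _).2 (sq_mem_arrIdeal _ _))
  · intro S hS
    refine Submodule.mem_sup_left ?_
    rw [embT_apply, rename_eProd, ← eProd_insert (hnot S), mem_ker_arrMk]
    refine eProd_mem_arrIdeal _ _ fun v => ?_
    by_cases hv : ω h v = 0
    · obtain ⟨j, hj, hne⟩ := hS v
      rw [restr_of_mem s h ω u j hv] at hne
      exact ⟨s j, Finset.mem_insert_of_mem (Finset.mem_map_of_mem _ hj), hne⟩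
    · exact ⟨h, Finset.mem_insert_self _ _, hv⟩
  · rintro Sp Sm hd hinf ⟨v, h1, h2⟩
    have hcard : Sp.card + Sm.card - 1 + 1 = Sp.card + Sm.card := by
      refine Nat.sub_add_cancel (Nat.one_le_iff_ne_zero.2 fun h0 => ?_)
      obtain ⟨hp0, hm0⟩ := Nat.add_eq_zero_iff.1 h0
      rw [Finset.card_eq_zero] at hp0 hm0
      subst hp0 hm0
      exact hinf 0 (by simp) (by simp)
    have hprod : embR s (eProd Sp * eProd Sm) ∈
        (homogeneousSubmodule κ ℚ (Sp.card + Sm.card - 1 + 1)).map (embR s) := by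
      rw [hcard]
      exact Submodule.mem_map_of_mem ((eProd_isHomogeneous Sp).mul (eProd_isHomogeneous Sm))
    have hz : ω h (v + -(ω h v) • u) = 0 := proj_mem h ω hu v
    have hz1 : ∀ j ∈ Sp, ω (s j) (v + -(ω h v) • u) = 0 := fun j hj => by
      rw [← restr_eq_proj]; exact h1 j hj
    have hz2 : ∀ j ∈ Sm, ω (s j) (v + -(ω h v) • u) = 0 := fun j hj => by
      rw [← restr_eq_proj]; exact h2 j hj
    have hd' : Disjoint (Sp.map s) (Sm.map s) := (Finset.disjoint_map s).2 hd
    rw [Submodule.mem_comap, embT_apply, rename_eRel]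
    rcases one_side s h ω Sp Sm (fun v hv hp hm => hinf v
      (fun j hj => by rw [restr_of_mem s h ω u j hv]; exact hp j hj)
      (fun j hj => by rw [restr_of_mem s h ω u j hv]; exact hm j hj)) with hside | hside
    · have hmem : eRel (insert h (Sp.map s)) (Sm.map s) ∈ arrIdeal ω := by
        refine eRel_mem_arrIdeal _ _ _ (Finset.disjoint_insert_left.2 ⟨hnot Sm, hd'⟩) ?_
          ⟨v + -(ω h v) • u, ?_, ?_⟩
        · intro v hp hm
          exact hside v (hp h (Finset.mem_insert_self _ _))
            (fun j hj => hp _ (Finset.mem_insert_of_mem (Finset.mem_map_of_mem _ hj)))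
            (fun j hj => hm _ (Finset.mem_map_of_mem _ hj))
        · simpa using And.intro hz hz1
        · simpa using hz2
      have e : X h * eRel (Sp.map s) (Sm.map s) =
          eRel (insert h (Sp.map s)) (Sm.map s) + embR s (eProd Sp * eProd Sm) := by
        rw [eRel_insert_left (hnot Sp), embR_apply, map_mul, rename_eProd, rename_eProd]; ring
      rw [e]
      exact Submodule.add_mem_sup ((mem_ker_arrMk _ _).2 hmem) hprod
    · have hmem : eRel (Sp.map s) (insert h (Sm.map s)) ∈ arrIdeal ω := by
        refine eRel_mem_arrIdeal _ _ _ (Finset.disjoint_insert_right.2 ⟨hnot Sp, hd'⟩) ?_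
          ⟨v + -(ω h v) • u, ?_, ?_⟩
        · intro v hp hm
          exact hside v (hm h (Finset.mem_insert_self _ _))
            (fun j hj => hp _ (Finset.mem_map_of_mem _ hj))
            (fun j hj => hm _ (Finset.mem_insert_of_mem (Finset.mem_map_of_mem _ hj)))
        · simpa using hz1
        · simpa using And.intro hz hz2
      have e : X h * eRel (Sp.map s) (Sm.map s) =
          eRel (Sp.map s) (insert h (Sm.map s)) + embR s (-(eProd Sp * eProd Sm)) := by
        rw [eRel_insert_right (hnot Sm), embR_apply, map_neg, map_mul, rename_eProd,
          rename_eProd]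
        ring
      rw [e]
      refine Submodule.add_mem_sup ((mem_ker_arrMk _ _).2 hmem) ?_
      rw [map_neg]
      exact neg_mem hprod

/-- The deletion-restriction inequality for dimensions. -/
theorem arrDim_le_deletion_restriction [Finite κ] (s : κ ↪ ι) (h : ι)
    (hh : ∀ i, i = h ∨ ∃ j, i = s j) (hn : ∀ j, s j ≠ h) (ω : ι → E →ᵃ[ℝ] ℝ) {u : E}
    (hu : (ω h).linear u = 1) (k : ℕ) :
    arrDim ω k ≤ arrDim (fun j => ω (s j)) k + prevDim (restr s h ω u) k := by
  refine finrank_map_le_add (arrMk ω) (arrMk fun j => ω (s j)) (arrMk (restr s h ω u))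
    _ _ _ (embR s) (embT s h) ?_ ?_ (hom_le_sup s h hh ω k)
  · intro x hx hx0
    exact rename_mem_of_deletion s ω ((arrMk_eq_zero_iff _ _).1 hx0) hx
  · intro x hx hx0
    cases k with
    | zero =>
      have : x = 0 := hx
      rw [this, map_zero]
      exact zero_mem _
    | succ k => exact embT_mem_of_restr s h hn ω hu ((arrMk_eq_zero_iff _ _).1 hx0) hx

theorem arrDim_le_deletion_of_mem [Finite κ] (s : κ ↪ ι) (h : ι)
    (hh : ∀ i, i = h ∨ ∃ j, i = s j) (ω : ι → E →ᵃ[ℝ] ℝ) (hX : X h ∈ arrIdeal ω) (k : ℕ) :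
    arrDim ω k ≤ arrDim (fun j => ω (s j)) k := by
  have := finrank_map_le_add (arrMk ω) (arrMk fun j => ω (s j)) (arrMk fun j => ω (s j))
    (homogeneousSubmodule ι ℚ k) (homogeneousSubmodule κ ℚ k) ⊥ (embR s) 0 ?_ ?_ ?_
  · rwa [Submodule.map_bot, finrank_bot, add_zero] at this
  · intro x hx hx0
    exact rename_mem_of_deletion s ω ((arrMk_eq_zero_iff _ _).1 hx0) hx
  · intro x _ _
    exact zero_mem _
  · refine (hom_le_sup s h hh ω k).trans (sup_le le_sup_left ?_)
    rintro _ ⟨x, -, rfl⟩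
    refine Submodule.mem_sup_left (Submodule.mem_sup_left ((mem_ker_arrMk _ _).2 ?_))
    exact Ideal.mul_mem_right _ _ hX

/-! ### Counting chambers -/

theorem chamber_of_point (s : κ ↪ ι) (h : ι) (hh : ∀ i, i = h ∨ ∃ j, i = s j)
    (ω : ι → E →ᵃ[ℝ] ℝ) (σ : κ → Bool) (w : E)
    (hw : ∀ j, if σ j then 0 < ω (s j) w else ω (s j) w < 0) (hne : ω h w ≠ 0) :
    ∃ τ ∈ chambers ω, τ h = decide (0 < ω h w) ∧ (fun j => τ (s j)) = σ := by
  refine ⟨fun i => decide (0 < ω i w), ⟨w, fun i => ?_⟩, rfl, ?_⟩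
  · have hne' : ω i w ≠ 0 := by
      rcases hh i with rfl | ⟨j, rfl⟩
      · exact hne
      · have := hw j
        split_ifs at this
        · exact this.ne'
        · exact this.ne
    by_cases h0 : 0 < ω i w
    · simp [h0]
    · simpa [h0] using lt_of_le_of_ne (not_lt.1 h0) hne'
  · funext j
    have := hw j
    cases hσ : σ j
    · simp only [hσ] at this
      simpa using le_of_lt this
    · simp only [hσ, if_true] at this
      simpa using this

/-- A point of `H` off the other zero sets can be moved to either side of `H` without changing the
other signs. -/
theorem perturb [Finite κ] (s : κ ↪ ι) (h : ι) (ω : ι → E →ᵃ[ℝ] ℝ) {u : E}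
    (hu : (ω h).linear u = 1) (σ : κ → Bool) (v : E)
    (hv : ∀ j, if σ j then 0 < ω (s j) v else ω (s j) v < 0) (h0 : ω h v = 0) :
    (∃ w, (∀ j, if σ j then 0 < ω (s j) w else ω (s j) w < 0) ∧ 0 < ω h w) ∧
    (∃ w, (∀ j, if σ j then 0 < ω (s j) w else ω (s j) w < 0) ∧ ω h w < 0) := by
  have hev : ∀ᶠ t in nhds (0 : ℝ), ∀ j,
      if σ j then 0 < ω (s j) (v + t • u) else ω (s j) (v + t • u) < 0 := by
    rw [Filter.eventually_all]
    intro j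
    have hcont : Filter.Tendsto (fun t : ℝ => ω (s j) (v + t • u)) (nhds 0)
        (nhds (ω (s j) v)) := by
      have : (fun t : ℝ => ω (s j) (v + t • u)) =
          fun t : ℝ => ω (s j) v + t * (ω (s j)).linear u := by
        funext t
        rw [affine_add, map_smul, smul_eq_mul]
      rw [this]
      have hc : Continuous fun t : ℝ => ω (s j) v + t * (ω (s j)).linear u := by fun_prop
      simpa using hc.tendsto 0
    have := hv j
    split_ifs at this ⊢
    · exact hcont.eventually (lt_mem_nhds this)
    · exact hcont.eventually (gt_mem_nhds this)
  have hval : ∀ t : ℝ, ω h (v + t • u) = t := fun t => by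
    rw [affine_add, map_smul, hu, h0, smul_eq_mul]; ring
  constructor
  · obtain ⟨t, ht, hpos⟩ := ((hev.filter_mono nhdsWithin_le_nhds).and
      (self_mem_nhdsWithin (s := Set.Ioi (0 : ℝ)))).exists
    exact ⟨v + t • u, ht, by rw [hval]; exact hpos⟩
  · obtain ⟨t, ht, hneg⟩ := ((hev.filter_mono nhdsWithin_le_nhds).and
      (self_mem_nhdsWithin (s := Set.Iio (0 : ℝ)))).exists
    exact ⟨v + t • u, ht, by rw [hval]; exact hneg⟩

theorem chambers_deletion_restriction [Finite ι] [Finite κ] (s : κ ↪ ι) (h : ι)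
    (hh : ∀ i, i = h ∨ ∃ j, i = s j) (ω : ι → E →ᵃ[ℝ] ℝ) {u : E}
    (hu : (ω h).linear u = 1) :
    (chambers fun j => ω (s j)).ncard + (chambers (restr s h ω u)).ncard ≤
      (chambers ω).ncard := by
  set r : (ι → Bool) → κ → Bool := fun τ j => τ (s j)
  set A : Set (ι → Bool) := {τ ∈ chambers ω | τ h = true} with hA
  set B : Set (ι → Bool) := {τ ∈ chambers ω | τ h = false} with hB
  have hpos : ∀ σ w, (∀ j, if σ j then 0 < ω (s j) w else ω (s j) w < 0) → 0 < ω h w →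
      σ ∈ r '' A := by
    intro σ w hw h0
    obtain ⟨τ, hτ, hτh, hτσ⟩ := chamber_of_point s h hh ω σ w hw h0.ne'
    exact ⟨τ, ⟨hτ, by simpa [h0] using hτh⟩, hτσ⟩
  have hneg : ∀ σ w, (∀ j, if σ j then 0 < ω (s j) w else ω (s j) w < 0) → ω h w < 0 →
      σ ∈ r '' B := by
    intro σ w hw h0
    obtain ⟨τ, hτ, hτh, hτσ⟩ := chamber_of_point s h hh ω σ w hw h0.ne
    exact ⟨τ, ⟨hτ, by simpa [h0.not_gt] using hτh⟩, hτσ⟩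
  have hunion : (chambers fun j => ω (s j)) ⊆ r '' A ∪ r '' B := by
    rintro σ ⟨v, hv⟩
    rcases lt_trichotomy (ω h v) 0 with h0 | h0 | h0
    · exact Or.inr (hneg σ v hv h0)
    · obtain ⟨⟨w, hw, hw0⟩, -⟩ := perturb s h ω hu σ v hv h0
      exact Or.inl (hpos σ w hw hw0)
    · exact Or.inl (hpos σ v hv h0)
  have hinter : chambers (restr s h ω u) ⊆ r '' A ∩ r '' B := by
    rintro σ ⟨v, hv⟩
    obtain ⟨⟨w, hw, hw0⟩, ⟨w', hw', hw0'⟩⟩ := perturb s h ω hu σ (v + -(ω h v) • u)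
      (fun j => by rw [← restr_eq_proj]; exact hv j) (proj_mem h ω hu v)
    exact ⟨hpos σ w hw hw0, hneg σ w' hw' hw0'⟩
  have hAB : A.ncard + B.ncard = (chambers ω).ncard := by
    rw [← Set.ncard_union_eq _ (Set.toFinite _) (Set.toFinite _)]
    · congr 1
      ext τ
      simp only [hA, hB, Set.mem_union, Set.mem_ofPred_eq]
      cases τ h <;> simp
    · rw [Set.disjoint_left]
      rintro τ ⟨-, h1⟩ ⟨-, h2⟩
      rw [h1] at h2
      exact absurd h2 (by simp)
  calc (chambers fun j => ω (s j)).ncard + (chambers (restr s h ω u)).ncard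
      ≤ (r '' A ∪ r '' B).ncard + (r '' A ∩ r '' B).ncard :=
        add_le_add (Set.ncard_le_ncard hunion (Set.toFinite _))
          (Set.ncard_le_ncard hinter (Set.toFinite _))
    _ = (r '' A).ncard + (r '' B).ncard :=
        Set.ncard_union_add_ncard_inter _ _ (Set.toFinite _) (Set.toFinite _)
    _ ≤ A.ncard + B.ncard :=
        add_le_add (Set.ncard_image_le (Set.toFinite _)) (Set.ncard_image_le (Set.toFinite _))
    _ = _ := hAB

/-! ### The upper bound -/

theorem sum_prevDim (ω : ι → E →ᵃ[ℝ] ℝ) (N : ℕ) :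
    ∑ k ∈ Finset.range (N + 1), prevDim ω k = ∑ k ∈ Finset.range N, arrDim ω k := by
  rw [Finset.sum_range_succ', prevDim_zero, add_zero]
  rfl

theorem arrDim_eq_zero_of_one_mem (ω : ι → E →ᵃ[ℝ] ℝ) (h1 : (1 : MvPolynomial ι ℚ) ∈ arrIdeal ω)
    (k : ℕ) : arrDim ω k = 0 := by
  have : (homogeneousSubmodule ι ℚ k).map (arrMk ω) = ⊥ := by
    rw [eq_bot_iff]
    rintro _ ⟨x, -, rfl⟩
    have := Ideal.mul_mem_left _ x h1
    rw [mul_one] at this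
    exact (arrMk_eq_zero_iff ω x).2 this
  rw [arrDim, this, finrank_bot]

/-- The total dimension of `B` is at most the number of chambers. -/
theorem sum_arrDim_le_chambers (n : ℕ) (ω : Fin n → E →ᵃ[ℝ] ℝ) (N : ℕ) :
    ∑ k ∈ Finset.range N, arrDim ω k ≤ (chambers ω).ncard := by
  induction n generalizing N with
  | zero =>
    have hne : 1 ≤ (chambers ω).ncard := by
      rw [Nat.one_le_iff_ne_zero, ← Nat.pos_iff_ne_zero, Set.ncard_pos (Set.toFinite _)]
      exact ⟨fun _ => true, 0, fun i => i.elim0⟩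
    have h0 : arrDim ω 0 ≤ 1 := by
      rw [arrDim, homogeneousSubmodule_zero, Submodule.one_eq_span, Submodule.map_span,
        Set.image_singleton]
      exact (finrank_span_le_card _).trans (by simp)
    have hk : ∀ k, arrDim ω (k + 1) = 0 := by
      intro k
      have : (homogeneousSubmodule (Fin 0) ℚ (k + 1)) = ⊥ := by
        rw [eq_bot_iff]
        intro p hp
        by_contra hp0
        have := IsHomogeneous.inj_right hp (isHomogeneous_of_isEmpty _ _ p) hp0
        omega
      rw [arrDim, this, Submodule.map_bot, finrank_bot]
    cases N with
    | zero => simp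
    | succ N =>
      rw [Finset.sum_range_succ']
      simp only [hk, Finset.sum_const_zero, zero_add]
      exact h0.trans hne
  | succ n ih =>
    have hh : ∀ i : Fin (n + 1), i = 0 ∨ ∃ j, i = Fin.succEmb n j := by
      intro i
      refine Fin.cases (Or.inl rfl) (fun j => Or.inr ⟨j, rfl⟩) i
    have hn : ∀ j, Fin.succEmb n j ≠ 0 := fun j => Fin.succ_ne_zero j
    by_cases hlin : (ω 0).linear = 0
    · have hconst : ∀ v, ω 0 v = ω 0 0 := by
        intro v
        have := affine_add (ω 0) 0 v
        rwa [zero_add, hlin, LinearMap.zero_apply, add_zero] at this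
      by_cases h0 : ω 0 0 = 0
      · have h1 : (1 : MvPolynomial (Fin (n + 1)) ℚ) ∈ arrIdeal ω := by
          have := eRel_mem_arrIdeal ω {0} ∅ (by simp)
            (fun v hv _ => by simpa [hconst, h0] using hv 0 (by simp)) ⟨0, by simpa using h0, by simp⟩
          have e : eRel ({0} : Finset (Fin (n + 1))) ∅ = -1 := by
            simp [eRel, eBdry, eProd]
          rw [e] at this
          simpa using neg_mem this
        simp [arrDim_eq_zero_of_one_mem ω h1]
      · have hX : X 0 ∈ arrIdeal ω := by
          have := eProd_mem_arrIdeal ω {0} (fun v => ⟨0, by simp, by rwa [hconst]⟩)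
          simpa [eProd] using this
        refine (Finset.sum_le_sum fun k _ =>
          arrDim_le_deletion_of_mem (Fin.succEmb n) 0 hh ω hX k).trans ((ih _ N).trans ?_)
        have hsub : (chambers fun j => ω (Fin.succEmb n j)) ⊆
            (fun τ j => τ (Fin.succEmb n j)) '' chambers ω := by
          rintro σ ⟨v, hv⟩
          obtain ⟨τ, hτ, -, hτσ⟩ := chamber_of_point (Fin.succEmb n) 0 hh ω σ v hv
            (by rwa [hconst])
          exact ⟨τ, hτ, hτσ⟩
        exact (Set.ncard_le_ncard hsub (Set.toFinite _)).trans
          (Set.ncard_image_le (Set.toFinite _))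
    · obtain ⟨u', hu'⟩ := DFunLike.ne_iff.1 hlin
      obtain ⟨u, hu⟩ : ∃ u, (ω 0).linear u = 1 := by
        refine ⟨((ω 0).linear u')⁻¹ • u', ?_⟩
        rw [map_smul, smul_eq_mul]
        exact inv_mul_cancel₀ hu'
      cases N with
      | zero => simp
      | succ N =>
        calc ∑ k ∈ Finset.range (N + 1), arrDim ω k
            ≤ ∑ k ∈ Finset.range (N + 1), (arrDim (fun j => ω (Fin.succEmb n j)) k +
                prevDim (restr (Fin.succEmb n) 0 ω u) k) :=
              Finset.sum_le_sum fun k _ =>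
                arrDim_le_deletion_restriction (Fin.succEmb n) 0 hh hn ω hu k
          _ ≤ _ := by
              rw [Finset.sum_add_distrib, sum_prevDim]
              exact add_le_add (ih _ _) (ih _ _)
          _ ≤ _ := chambers_deletion_restriction (Fin.succEmb n) 0 hh ω hu
/-! ### The lower bound for central arrangements -/

/-- Evaluation of polynomials on chambers: the variable `X i` is sent to the indicator function of
the chambers on the positive side of the `i`-th hyperplane (a Heaviside function). -/
noncomputable def chamberEval (ω : ι → E →ᵃ[ℝ] ℝ) :
    MvPolynomial ι ℚ →ₐ[ℚ] (chambers ω → ℚ) :=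
  aeval fun i σ => if σ.1 i then 1 else 0

/-- The functions on chambers that are polynomials of degree `< m` in the Heaviside functions. -/
noncomputable def heaviFilt (ω : ι → E →ᵃ[ℝ] ℝ) : ℕ → Submodule ℚ (chambers ω → ℚ)
  | 0 => ⊥
  | m + 1 => heaviFilt ω m ⊔ (homogeneousSubmodule ι ℚ m).map (chamberEval ω).toLinearMap

theorem heaviFilt_mono (ω : ι → E →ᵃ[ℝ] ℝ) : Monotone (heaviFilt ω) :=
  monotone_nat_of_le_succ fun _ => le_sup_left

theorem chamberEval_mem (ω : ι → E →ᵃ[ℝ] ℝ) {p : MvPolynomial ι ℚ} {d m : ℕ}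
    (hp : p.IsHomogeneous d) (hd : d < m) : chamberEval ω p ∈ heaviFilt ω m :=
  heaviFilt_mono ω (Nat.succ_le_of_lt hd)
    (Submodule.mem_sup_right (Submodule.mem_map_of_mem (f := (chamberEval ω).toLinearMap) hp))

theorem X_mul_mem_heaviFilt (ω : ι → E →ᵃ[ℝ] ℝ) (i : ι) {m : ℕ} {f : chambers ω → ℚ}
    (hf : f ∈ heaviFilt ω m) : chamberEval ω (X i) * f ∈ heaviFilt ω (m + 1) := by
  induction m generalizing f with
  | zero =>
    have : f = 0 := hf
    rw [this, mul_zero]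
    exact zero_mem _
  | succ m ih =>
    obtain ⟨a, ha, _, ⟨p, hp, rfl⟩, rfl⟩ := Submodule.mem_sup.1 hf
    rw [mul_add]
    refine add_mem (heaviFilt_mono ω (Nat.le_succ _) (ih ha)) ?_
    have : chamberEval ω (X i) * (chamberEval ω).toLinearMap p = chamberEval ω (X i * p) :=
      (map_mul _ _ _).symm
    rw [this]
    exact chamberEval_mem ω (X_mul_mem_hom i hp) (Nat.lt_succ_self _)

theorem eProd_mul_mem_heaviFilt (ω : ι → E →ᵃ[ℝ] ℝ) (S : Finset ι) {m : ℕ}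
    {f : chambers ω → ℚ} (hf : f ∈ heaviFilt ω m) :
    chamberEval ω (eProd S) * f ∈ heaviFilt ω (m + S.card) := by
  induction S using Finset.induction_on with
  | empty => simpa [eProd_empty] using hf
  | insert a S ha ih =>
    rw [eProd_insert ha, map_mul, mul_assoc, Finset.card_insert_of_notMem ha]
    exact X_mul_mem_heaviFilt ω a ih

/-- The error term in the expansion of `∏ (X i - 1)` up to the two leading degrees. -/
noncomputable def eTail (S : Finset ι) : MvPolynomial ι ℚ :=
  ∏ i ∈ S, (X i - 1) - eProd S + eBdry S

theorem eTail_empty : eTail (∅ : Finset ι) = 0 := by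
  simp [eTail, eProd_empty, eBdry_empty]

theorem chamberEval_eTail_mem (ω : ι → E →ᵃ[ℝ] ℝ) (S : Finset ι) :
    chamberEval ω (eTail S) ∈ heaviFilt ω (S.card - 1) := by
  induction S using Finset.induction_on with
  | empty => rw [eTail_empty, map_zero]; exact zero_mem _
  | insert a S ha ih =>
    have e : eTail (insert a S) = eBdry S + X a * eTail S - eTail S := by
      rw [eTail, Finset.prod_insert ha, eProd_insert ha, eBdry_insert ha, eTail]; ring
    rw [e, Finset.card_insert_of_notMem ha, Nat.add_sub_cancel]
    rcases S.eq_empty_or_nonempty with rfl | hS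
    · rw [eTail_empty, eBdry_empty]; simp
    · have hc : S.card - 1 + 1 = S.card := Nat.sub_add_cancel hS.card_pos
      rw [map_sub, map_add, map_mul]
      refine sub_mem (add_mem ?_ ?_) (heaviFilt_mono ω (Nat.sub_le _ _) ih)
      · exact chamberEval_mem ω (eBdry_isHomogeneous S) (by omega)
      · have := X_mul_mem_heaviFilt ω a ih
        rwa [hc] at this

/-- If the signs `(Sp, Sm)` are not realised, the corresponding product of Heaviside functions
vanishes on all chambers. -/
theorem chamberEval_infeasible (ω : ι → E →ᵃ[ℝ] ℝ) (Sp Sm : Finset ι)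
    (hinf : ∀ v, (∀ i ∈ Sp, 0 < ω i v) → (∀ i ∈ Sm, ω i v < 0) → False) :
    chamberEval ω (eProd Sp * ∏ i ∈ Sm, (X i - 1)) = 0 := by
  funext σ
  obtain ⟨v, hv⟩ := σ.2
  have hX : ∀ i, chamberEval ω (X i) σ = if σ.1 i then 1 else 0 := fun i => by
    simp [chamberEval]
  rw [map_mul, Pi.mul_apply, Pi.zero_apply, mul_eq_zero, eProd, map_prod, map_prod,
    Finset.prod_apply, Finset.prod_apply, Finset.prod_eq_zero_iff, Finset.prod_eq_zero_iff]
  by_contra! hcon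
  refine hinf v (fun i hi => ?_) (fun i hi => ?_)
  · have h1 := hcon.1 i hi
    rw [hX] at h1
    have h2 := hv i
    cases hσ : σ.1 i <;> simp_all
  · have h1 := hcon.2 i hi
    rw [map_sub, map_one, Pi.sub_apply, hX, Pi.one_apply] at h1
    have h2 := hv i
    cases hσ : σ.1 i <;> simp_all

/-- For a central arrangement, every relation of degree `k` is the leading form of a polynomial
vanishing on all chambers: its evaluation has degree `< k`. For family (3), infeasibility of
`(S⁺, S⁻)` and, by antipodality, of `(S⁻, S⁺)` gives two vanishing products with the same leading
monomial, and the relation is the leading form of their difference. -/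
theorem chamberEval_mem_of_arrIdeal (ω : ι → E →ᵃ[ℝ] ℝ) (hneg : ∀ i v, ω i (-v) = -ω i v)
    {k : ℕ} {p : MvPolynomial ι ℚ} (hp : p ∈ arrIdeal ω) (hk : p.IsHomogeneous k) :
    chamberEval ω p ∈ heaviFilt ω k := by
  refine arrIdeal_graded_mem ω
    (fun k => (heaviFilt ω k).comap (chamberEval ω).toLinearMap) ?_ ?_ ?_ ?_ hp hk
  · intro k p i hp
    have := X_mul_mem_heaviFilt ω i hp
    change chamberEval ω (X i * p) ∈ heaviFilt ω (k + 1)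
    rw [map_mul]
    exact this
  · intro i
    have : chamberEval ω (X i ^ 2) = chamberEval ω (X i) := by
      funext σ
      simp [chamberEval]
    change chamberEval ω (X i ^ 2) ∈ heaviFilt ω 2
    rw [this]
    exact chamberEval_mem ω (isHomogeneous_X ℚ i) (by norm_num)
  · intro S hS
    obtain ⟨i, -, hne⟩ := hS 0
    have := hneg i 0
    rw [neg_zero] at this
    exact absurd (by linarith) hne
  · intro Sp Sm hd hinf _
    have e1 := chamberEval_infeasible ω Sp Sm hinf
    have e2 := chamberEval_infeasible ω Sm Sp fun v hm hp => hinf (-v)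
      (fun i hi => by rw [hneg]; linarith [hp i hi])
      (fun i hi => by rw [hneg]; linarith [hm i hi])
    have e : eRel Sp Sm = (eProd Sp * eTail Sm - eProd Sm * eTail Sp) -
        (eProd Sp * ∏ i ∈ Sm, (X i - 1) - eProd Sm * ∏ i ∈ Sp, (X i - 1)) := by
      rw [eRel, eTail, eTail]; ring
    change chamberEval ω (eRel Sp Sm) ∈ heaviFilt ω (Sp.card + Sm.card - 1)
    rw [e, map_sub, map_sub, map_sub, e1, e2, sub_self, sub_zero, map_mul, map_mul]
    refine sub_mem ?_ ?_
    · rcases Sm.eq_empty_or_nonempty with rfl | hS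
      · rw [eTail_empty, map_zero, mul_zero]; exact zero_mem _
      · have := eProd_mul_mem_heaviFilt ω Sp (chamberEval_eTail_mem ω Sm)
        have hc := hS.card_pos
        rwa [show Sm.card - 1 + Sp.card = Sp.card + Sm.card - 1 by omega] at this
    · rcases Sp.eq_empty_or_nonempty with rfl | hS
      · rw [eTail_empty, map_zero, mul_zero]; exact zero_mem _
      · have := eProd_mul_mem_heaviFilt ω Sm (chamberEval_eTail_mem ω Sp)
        have hc := hS.card_pos
        rwa [show Sp.card - 1 + Sm.card = Sp.card + Sm.card - 1 by omega] at this

theorem finrank_heaviFilt_le [Finite ι] (ω : ι → E →ᵃ[ℝ] ℝ)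
    (hneg : ∀ i v, ω i (-v) = -ω i v) (N : ℕ) :
    Module.finrank ℚ (heaviFilt ω N) ≤ ∑ k ∈ Finset.range N, arrDim ω k := by
  induction N with
  | zero => rw [heaviFilt, finrank_bot]; exact Nat.zero_le _
  | succ N ih =>
    obtain ⟨L, hL, _, hd, hl⟩ := exists_small_lift (arrMk ω) (homogeneousSubmodule ι ℚ N)
    have hle : heaviFilt ω (N + 1) ≤ heaviFilt ω N ⊔ L.map (chamberEval ω).toLinearMap := by
      refine sup_le le_sup_left ?_
      rintro _ ⟨x, hx, rfl⟩
      obtain ⟨y, hy, hxy⟩ := hl x hx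
      have hmem := chamberEval_mem_of_arrIdeal ω hneg ((arrMk_eq_zero_iff _ _).1 hxy)
        (sub_mem hx (hL hy) : x - y ∈ homogeneousSubmodule ι ℚ N)
      have e : (chamberEval ω).toLinearMap x =
          chamberEval ω (x - y) + (chamberEval ω).toLinearMap y := by simp
      rw [e]
      exact Submodule.add_mem_sup hmem (Submodule.mem_map_of_mem hy)
    rw [Finset.sum_range_succ]
    calc Module.finrank ℚ (heaviFilt ω (N + 1))
        ≤ Module.finrank ℚ ↥(heaviFilt ω N ⊔ L.map (chamberEval ω).toLinearMap) :=
          Submodule.finrank_mono hle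
      _ ≤ Module.finrank ℚ (heaviFilt ω N) +
            Module.finrank ℚ (L.map (chamberEval ω).toLinearMap) :=
          Submodule.finrank_add_le_finrank_add_finrank _ _
      _ ≤ _ := add_le_add ih ((Submodule.finrank_map_le _ _).trans hd)

/-- The Heaviside functions generate the algebra of all functions on the chambers. -/
theorem chamberEval_surjective [Finite ι] (ω : ι → E →ᵃ[ℝ] ℝ) :
    Function.Surjective (chamberEval ω) := by
  classical
  have := Fintype.ofFinite ι
  have := Fintype.ofFinite (chambers ω)
  have hsingle : ∀ σ : chambers ω, chamberEval ω
      (∏ i, if σ.1 i then X i else 1 - X i) = Pi.single σ 1 := by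
    intro σ
    funext τ
    rw [map_prod, Finset.prod_apply]
    have hX : ∀ i, chamberEval ω (X i) τ = if τ.1 i then 1 else 0 := fun i => by
      simp [chamberEval]
    by_cases h : τ = σ
    · subst h
      rw [Pi.single_eq_same]
      refine Finset.prod_eq_one fun i _ => ?_
      cases hτ : τ.1 i <;> simp [hX, hτ]
    · rw [Pi.single_eq_of_ne h]
      obtain ⟨i, hi⟩ : ∃ i, τ.1 i ≠ σ.1 i := by
        by_contra! hcon
        exact h (Subtype.ext (funext hcon))
      refine Finset.prod_eq_zero (Finset.mem_univ i) ?_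
      cases hτ : τ.1 i <;> cases hσ : σ.1 i <;> simp_all
  intro f
  refine ⟨∑ σ, f σ • ∏ i, if σ.1 i then X i else 1 - X i, ?_⟩
  rw [map_sum]
  simp only [map_smul, hsingle]
  funext τ
  simp [Finset.sum_apply, Pi.single_apply]

/-- For a central arrangement the number of chambers is at most the total dimension of `B`. -/
theorem chambers_le_sum_arrDim [Finite ι] (ω : ι → E →ᵃ[ℝ] ℝ)
    (hneg : ∀ i v, ω i (-v) = -ω i v) :
    ∃ N₀, ∀ N ≥ N₀, (chambers ω).ncard ≤ ∑ k ∈ Finset.range N, arrDim ω k := by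
  obtain ⟨N₀, hN₀⟩ := monotone_stabilizes_iff_noetherian.2
    (inferInstance : IsNoetherian ℚ (chambers ω → ℚ)) ⟨heaviFilt ω, heaviFilt_mono ω⟩
  have htop : heaviFilt ω N₀ = ⊤ := by
    rw [eq_top_iff]
    rintro f -
    obtain ⟨p, rfl⟩ := chamberEval_surjective ω f
    rw [← sum_homogeneousComponent p, map_sum]
    refine sum_mem fun d _ => ?_
    have h1 : chamberEval ω (homogeneousComponent d p) ∈ heaviFilt ω (max N₀ (d + 1)) :=
      chamberEval_mem ω (homogeneousComponent_isHomogeneous d p)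
        (lt_of_lt_of_le (Nat.lt_succ_self d) (le_max_right _ _))
    have h2 : heaviFilt ω N₀ = heaviFilt ω (max N₀ (d + 1)) := hN₀ _ (le_max_left _ _)
    rwa [h2]
  refine ⟨N₀, fun N hN => ?_⟩
  refine le_trans (le_trans ?_ (finrank_heaviFilt_le ω hneg N₀))
    (Finset.sum_le_sum_of_subset (Finset.range_subset_range.2 hN))
  have := Fintype.ofFinite (chambers ω)
  rw [htop, finrank_top, Module.finrank_fintype_fun_eq_card, ← Nat.card_eq_fintype_card]
  exact le_rfl

end

/-! ### The cone -/

section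

set_option linter.unusedSectionVars false

variable {n : ℕ}

/-- The defining forms of the cone, as affine maps. -/
noncomputable def coneAff (ω : Fin n → V →ᵃ[ℝ] ℝ) (j : Option (Fin n)) : (V × ℝ) →ᵃ[ℝ] ℝ :=
  (coneForm ω j).toAffineMap

theorem coneAff_none (ω : Fin n → V →ᵃ[ℝ] ℝ) (p : V × ℝ) : coneAff ω none p = -p.2 := rfl

theorem coneAff_some (ω : Fin n → V →ᵃ[ℝ] ℝ) (i : Fin n) (p : V × ℝ) :
    coneAff ω (some i) p = (ω i).linear p.1 + ω i 0 * p.2 := rfl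

theorem coneAff_neg (ω : Fin n → V →ᵃ[ℝ] ℝ) (j : Option (Fin n)) (p : V × ℝ) :
    coneAff ω j (-p) = -coneAff ω j p := map_neg (coneForm ω j) p

theorem coneAff_slice (ω : Fin n → V →ᵃ[ℝ] ℝ) (i : Fin n) (v : V) :
    coneAff ω (some i) (v, 1) = ω i v := by
  have := affine_add (ω i) 0 v
  rw [zero_add] at this
  rw [coneAff_some, this]; ring

theorem coneAff_smul (ω : Fin n → V →ᵃ[ℝ] ℝ) (j : Option (Fin n)) (c : ℝ) (p : V × ℝ) :
    coneAff ω j (c • p) = c * coneAff ω j p := map_smul (coneForm ω j) c p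

/-- If the hyperplanes `H i`, `i ∈ S`, have no common point, the coordinate `r` on `V ⊕ ℝ` is a
linear combination of the forms of `cH i`, `i ∈ S`. -/
theorem exists_coeff_of_no_common_zero (ω : Fin n → V →ᵃ[ℝ] ℝ) (S : Finset (Fin n))
    (hS : ∀ v, ∃ i ∈ S, ω i v ≠ 0) :
    ∃ μ : Fin n → ℝ, ∀ p : V × ℝ, ∑ i ∈ S, μ i * coneAff ω (some i) p = p.2 := by
  classical
  have hspan : LinearMap.snd ℝ V ℝ ∈ Submodule.span ℝ
      (Set.range fun i => if i ∈ S then coneForm ω (some i) else 0) := by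
    refine mem_span_of_iInf_ker_le_ker fun p hp => ?_
    rw [Submodule.mem_iInf] at hp
    by_contra hr
    have hr' : p.2 ≠ 0 := hr
    obtain ⟨i, hi, hne⟩ := hS (p.2⁻¹ • p.1)
    have h1 : coneAff ω (some i) p = 0 := by
      have := hp i
      rwa [if_pos hi] at this
    have h2 : p.2⁻¹ • p = (p.2⁻¹ • p.1, (1 : ℝ)) :=
      Prod.ext rfl (inv_mul_cancel₀ hr')
    apply hne
    rw [← coneAff_slice, ← h2, coneAff_smul, h1, mul_zero]
  obtain ⟨μ, hμ⟩ := (Submodule.mem_span_range_iff_exists_fun ℝ).1 hspan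
  refine ⟨μ, fun p => ?_⟩
  have h3 := LinearMap.congr_fun hμ p
  rw [LinearMap.sum_apply] at h3
  refine Eq.trans ?_ h3
  rw [← Finset.sum_subset (Finset.subset_univ S)]
  · refine Finset.sum_congr rfl fun i hi => ?_
    rw [if_pos hi]
    rfl
  · intro i _ hi
    simp [hi]

theorem eProd_mul_eRel_mem_prevHom (A Sp Sm : Finset (Fin n)) :
    eProd A * eRel Sp Sm ∈ prevHom (Fin n) (A.card + Sp.card + Sm.card) := by
  by_cases h0 : Sp.card + Sm.card = 0
  · obtain ⟨hp0, hm0⟩ := Nat.add_eq_zero_iff.1 h0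
    rw [Finset.card_eq_zero] at hp0 hm0
    subst hp0 hm0
    rw [eRel, eBdry_empty, mul_zero, zero_mul, sub_zero, mul_zero]
    exact zero_mem _
  · have := (eProd_isHomogeneous A).mul (eRel_isHomogeneous Sp Sm)
    rw [show A.card + Sp.card + Sm.card = (A.card + (Sp.card + Sm.card - 1)) + 1 by omega]
    exact this

/-- The relations of `𝒜` hold in `B(c𝒜)` modulo the ideal generated by `e₀`. -/
theorem embR_mem_of_cone (ω : Fin n → V →ᵃ[ℝ] ℝ) {k : ℕ} {p : MvPolynomial (Fin n) ℚ}
    (hp : p ∈ arrIdeal ω) (hk : p.IsHomogeneous k) :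
    embR Function.Embedding.some p ∈ LinearMap.ker (arrMk (coneAff ω)) ⊔
      (prevHom (Fin n) k).map (embT Function.Embedding.some none) := by
  have hnot : ∀ S : Finset (Fin n), none ∉ S.map Function.Embedding.some := by
    intro S hS
    obtain ⟨j, -, hj⟩ := Finset.mem_map.1 hS
    exact absurd hj (by simp)
  refine arrIdeal_graded_mem ω (fun k => (LinearMap.ker (arrMk (coneAff ω)) ⊔
      (prevHom (Fin n) k).map (embT Function.Embedding.some none)).comap
        (embR Function.Embedding.some)) ?_ ?_ ?_ ?_ hp hk
  · intro k p j hp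
    rw [Submodule.mem_comap, embR_X_mul]
    obtain ⟨a, ha, _, ⟨b, hb, rfl⟩, e⟩ := Submodule.mem_sup.1 hp
    rw [← e, mul_add, ← embT_X_mul]
    exact Submodule.add_mem_sup (mul_mem_ker _ ha)
      (Submodule.mem_map_of_mem (X_mul_mem_prevHom j hb))
  · intro j
    refine Submodule.mem_sup_left ?_
    rw [embR_apply, map_pow, rename_X, mem_ker_arrMk]
    exact sq_mem_arrIdeal _ _
  · intro S hS
    obtain ⟨μ, hμ⟩ := exists_coeff_of_no_common_zero ω S hS
    -- the linear dependence `Σ μ i • cω i + cω₀ = 0` gives a signed relation containing `cH₀`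
    set Sp := S.filter fun i => 0 < μ i with hSp
    set Sm := S.filter fun i => μ i < 0 with hSm
    have hd : Disjoint Sp Sm := by
      rw [Finset.disjoint_left]
      intro i h1 h2
      exact absurd (Finset.mem_filter.1 h1).2 (not_lt.2 (Finset.mem_filter.1 h2).2.le)
    have hsub : Sp ∪ Sm ⊆ S :=
      Finset.union_subset (Finset.filter_subset _ _) (Finset.filter_subset _ _)
    have hmem : eRel (insert none (Sp.map Function.Embedding.some))
        (Sm.map Function.Embedding.some) ∈ arrIdeal (coneAff ω) := by
      refine eRel_mem_arrIdeal _ _ _ (Finset.disjoint_insert_left.2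
        ⟨hnot Sm, (Finset.disjoint_map _).2 hd⟩) ?_ ⟨0, ?_, ?_⟩
      · intro p hp hm
        have h0 := hp none (Finset.mem_insert_self _ _)
        rw [coneAff_none, ← hμ p] at h0
        have h1 : 0 ≤ ∑ i ∈ S, μ i * coneAff ω (some i) p := by
          refine Finset.sum_nonneg fun i hi => ?_
          rcases lt_trichotomy (μ i) 0 with h | h | h
          · exact (mul_pos_of_neg_of_neg h (hm _ (Finset.mem_map_of_mem _
              (Finset.mem_filter.2 ⟨hi, h⟩)))).le
          · rw [h, zero_mul]
          · exact (mul_pos h (hp _ (Finset.mem_insert_of_mem (Finset.mem_map_of_mem _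
              (Finset.mem_filter.2 ⟨hi, h⟩))))).le
        linarith
      · intro j _
        exact map_zero (coneForm ω j)
      · intro j _
        exact map_zero (coneForm ω j)
    have hS1 : eProd S = eProd (S \ (Sp ∪ Sm)) * (eProd Sp * eProd Sm) := by
      rw [eProd, ← Finset.prod_sdiff hsub, Finset.prod_union hd]; rfl
    have hS2 : S.card = (S \ (Sp ∪ Sm)).card + Sp.card + Sm.card := by
      have h1 := Finset.card_sdiff_add_card_eq_card hsub
      rw [Finset.card_union_of_disjoint hd] at h1
      omega
    rw [Submodule.mem_comap]
    have e : embR Function.Embedding.some (eProd S) =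
        -embR Function.Embedding.some (eProd (S \ (Sp ∪ Sm))) *
          eRel (insert none (Sp.map Function.Embedding.some)) (Sm.map Function.Embedding.some) +
        embT Function.Embedding.some none (eProd (S \ (Sp ∪ Sm)) * eRel Sp Sm) := by
      rw [hS1, eRel_insert_left (hnot Sp), embT_apply]
      simp only [embR_apply, map_mul, rename_eProd, rename_eRel]
      ring
    rw [e]
    refine Submodule.add_mem_sup (mul_mem_ker _ ((mem_ker_arrMk _ _).2 hmem))
      (Submodule.mem_map_of_mem ?_)
    rw [hS2]
    exact eProd_mul_eRel_mem_prevHom _ _ _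
  · rintro Sp Sm hd hinf ⟨v, h1, h2⟩
    refine Submodule.mem_sup_left ?_
    rw [embR_apply, rename_eRel, mem_ker_arrMk]
    refine eRel_mem_arrIdeal _ _ _ ((Finset.disjoint_map _).2 hd) ?_ ⟨0, ?_, ?_⟩
    · intro p hp hm
      -- dehomogenise at the common zero `v`: `ω i (v + (p.1 - p.2 • v)) = cω i p`
      have hval : ∀ i, ω i v = 0 →
          ω i (v + (p.1 - p.2 • v)) = coneAff ω (some i) p := by
        intro i hi
        have h3 := affine_add (ω i) 0 v
        rw [zero_add, hi] at h3
        rw [affine_add, hi, map_sub, map_smul, smul_eq_mul, coneAff_some]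
        linear_combination p.2 * h3
      refine hinf (v + (p.1 - p.2 • v)) (fun i hi => ?_) (fun i hi => ?_)
      · rw [hval i (h1 i hi)]
        exact hp _ (Finset.mem_map_of_mem _ hi)
      · rw [hval i (h2 i hi)]
        exact hm _ (Finset.mem_map_of_mem _ hi)
    · intro j _
      exact map_zero (coneForm ω j)
    · intro j _
      exact map_zero (coneForm ω j)

theorem arrDim_cone_le (ω : Fin n → V →ᵃ[ℝ] ℝ) (k : ℕ) :
    arrDim (coneAff ω) k ≤ prevDim ω k + arrDim ω k := by
  refine finrank_map_le_add (arrMk (coneAff ω)) (arrMk ω) (arrMk ω) _ _ _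
    (embT Function.Embedding.some none) (embR Function.Embedding.some) ?_ ?_ ?_
  · intro x hx hx0
    cases k with
    | zero =>
      have : x = 0 := hx
      rw [this, map_zero, map_zero]
    | succ k =>
      obtain ⟨a, ha, _, ⟨b, -, rfl⟩, e⟩ := Submodule.mem_sup.1
        (embR_mem_of_cone ω ((arrMk_eq_zero_iff _ _).1 hx0) hx)
      have e2 : embT Function.Embedding.some none x = X none * a +
          embR Function.Embedding.some b * X none ^ 2 := by
        change X none * embR Function.Embedding.some x = _
        rw [← e, embT_apply, embR_apply]; ring
      rw [e2]
      exact add_mem (mul_mem_ker _ ha)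
        (mul_mem_ker _ ((mem_ker_arrMk _ _).2 (sq_mem_arrIdeal _ _)))
  · intro x hx hx0
    exact embR_mem_of_cone ω ((arrMk_eq_zero_iff _ _).1 hx0) hx
  · rw [sup_right_comm]
    refine hom_le_sup Function.Embedding.some none ?_ (coneAff ω) k
    intro i
    cases i with
    | none => exact Or.inl rfl
    | some j => exact Or.inr ⟨j, rfl⟩

/-- Each chamber of `𝒜` gives a chamber of `c𝒜` in `r > 0` and its antipode in `r < 0`. -/
theorem two_mul_chambers_le (ω : Fin n → V →ᵃ[ℝ] ℝ) :
    2 * (chambers ω).ncard ≤ (chambers (coneAff ω)).ncard := by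
  set up : (Fin n → Bool) → Option (Fin n) → Bool := fun σ j => j.elim false σ with hup
  set dn : (Fin n → Bool) → Option (Fin n) → Bool := fun σ j => j.elim true fun i => !σ i with hdn
  have hupi : Function.Injective up := fun σ τ h => funext fun i => congrFun h (some i)
  have hdni : Function.Injective dn := fun σ τ h => funext fun i => by
    have := congrFun h (some i)
    simpa [hdn] using this
  have hsub : Set.image up (chambers ω) ∪ Set.image dn (chambers ω) ⊆ chambers (coneAff ω) := by
    rintro _ (⟨σ, ⟨v, hv⟩, rfl⟩ | ⟨σ, ⟨v, hv⟩, rfl⟩)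
    · refine ⟨(v, 1), fun j => ?_⟩
      cases j with
      | none => simp [hup, coneAff_none]
      | some i => rw [coneAff_slice]; exact hv i
    · refine ⟨-(v, 1), fun j => ?_⟩
      rw [coneAff_neg]
      cases j with
      | none => simp [hdn, coneAff_none]
      | some i =>
        rw [coneAff_slice]
        have := hv i
        cases hσ : σ i <;> simp_all
  have hdisj : Disjoint (Set.image up (chambers ω)) (Set.image dn (chambers ω)) := by
    rw [Set.disjoint_left]
    rintro _ ⟨σ, -, rfl⟩ ⟨τ, -, h⟩
    exact absurd (congrFun h none) (by simp [hup, hdn])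
  calc 2 * (chambers ω).ncard = (Set.image up (chambers ω)).ncard + (Set.image dn (chambers ω)).ncard := by
        rw [Set.ncard_image_of_injective _ hupi, Set.ncard_image_of_injective _ hdni, two_mul]
    _ = (Set.image up (chambers ω) ∪ Set.image dn (chambers ω)).ncard :=
        (Set.ncard_union_eq hdisj (Set.toFinite _) (Set.toFinite _)).symm
    _ ≤ _ := Set.ncard_le_ncard hsub (Set.toFinite _)

theorem arrDim_cone_eq (ω : Fin n → V →ᵃ[ℝ] ℝ) (k : ℕ) :
    arrDim (coneAff ω) k = prevDim ω k + arrDim ω k := by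
  obtain ⟨N₀, hN₀⟩ := chambers_le_sum_arrDim (coneAff ω) (coneAff_neg ω)
  set N := max N₀ k with hN
  have hlow := hN₀ (N + 1) ((le_max_left _ _).trans (Nat.le_succ _))
  have htwo := two_mul_chambers_le ω
  have hle : ∀ j ∈ Finset.range (N + 1), arrDim (coneAff ω) j ≤ prevDim ω j + arrDim ω j :=
    fun j _ => arrDim_cone_le ω j
  have hup : ∑ j ∈ Finset.range (N + 1), (prevDim ω j + arrDim ω j) ≤ 2 * (chambers ω).ncard := by
    rw [Finset.sum_add_distrib, sum_prevDim, two_mul]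
    exact add_le_add (sum_arrDim_le_chambers n ω N) (sum_arrDim_le_chambers n ω (N + 1))
  have heq := le_antisymm (Finset.sum_le_sum hle) (hup.trans (htwo.trans hlow))
  exact (Finset.sum_eq_sum_iff_of_le hle).1 heq k
    (Finset.mem_range.2 (Nat.lt_succ_of_le (le_max_right _ _)))

end

/-- `Poin(B(c𝒜)) = (1 + t²)·Poin(B(𝒜))`: for every `k ≥ 0`,
`dim B(c𝒜)ₖ = dim B(𝒜)ₖ + dim B(𝒜)ₖ₋₁`. -/
theorem bAlg_cone_poincare {n : ℕ} (ω : Fin n → V →ᵃ[ℝ] ℝ)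
    (hω : ∀ i, (ω i).linear ≠ 0) :
    ∀ k : ℕ,
      Module.finrank ℚ (bGrade (cHyp ω) (cHplus ω) (cHminus ω) k) =
        Module.finrank ℚ (bGrade (Hyp ω) (Hplus ω) (Hminus ω) k) +
          (if k = 0 then 0 else
            Module.finrank ℚ (bGrade (Hyp ω) (Hplus ω) (Hminus ω) (k - 1))) := by
  intro k
  have h := arrDim_cone_eq ω k
  cases k with
  | zero =>
    rw [prevDim_zero, zero_add] at h
    rw [if_pos rfl, add_zero]
    exact h
  | succ k =>
    rw [prevDim_succ, add_comm (arrDim ω k)] at h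
    rw [if_neg (Nat.succ_ne_zero k)]
    exact h
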